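/- Let M be a C-minimal structure, F = {f_u : u ∈ U} a nice family of functions with domain V and absorbing element e, and g : V → V a definable function with g(e) = e. If Γ_{g,u} is nonempty, then there is v ∈ Γ_{g,u} such that Γ_{g,u} is exactly the cone of v at the node u∧v, i.e., Γ_{g,u} = {z ∈ M : C(u,z,v)}. Moreover, for fixed g, the nonempty sets Γ_{g,u} (u ∈ U) form a chain of cones under inclusion. -/

import Mathlib

open FirstOrder Set

universe u

namespace CMinPaper

variable {M : Type u}

/-- The axioms of a (dense) C-relation. -/
def IsCRelation (C : M → M → M → Prop) : Prop :=
  (∀ x y z, C x y z → C x z y) ∧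
  (∀ x y z, C x y z → ¬ C y x z) ∧
  (∀ x y z w, C x y z → C x w z ∨ C w y z) ∧
  (∀ x y, x ≠ y → ∃ z, z ≠ y ∧ C x y z)

/-- A cone (open ball). -/
def IsCone (C : M → M → M → Prop) (s : Set M) : Prop :=
  ∃ a b : M, a ≠ b ∧ s = {x | C a x b}

/-- A 0-level set (closed ball). -/
def IsClosedBall (C : M → M → M → Prop) (s : Set M) : Prop :=
  ∃ a b : M, s = {x | ¬ C x a b}

/-- A ball is a cone or a closed ball. -/
def IsBall (C : M → M → M → Prop) (s : Set M) : Prop :=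
  IsCone C s ∨ IsClosedBall C s

/-- The node `a ∧ b` of the underlying tree, viewed as the closed ball
`{z | ¬ C z a b}` of `M` it determines. -/
def node (C : M → M → M → Prop) (a b : M) : Set M := {x | ¬ C x a b}

/-- `Δ(x,y,z)`. -/
def Delta (C : M → M → M → Prop) (x y z : M) : Prop := ¬ C x y z ∧ ¬ C y x z

/-- The (unary) sets which are definable by a quantifier-free formula with
parameters using only `C` and equality.  A term is either the variable
(`Option.none`) or a parameter (`Option.some a`). -/
inductive QFDef (C : M → M → M → Prop) : Set M → Prop
  | atomC (t₁ t₂ t₃ : Option M) :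
      QFDef C {x | C (t₁.getD x) (t₂.getD x) (t₃.getD x)}
  | atomEq (t₁ t₂ : Option M) : QFDef C {x | t₁.getD x = t₂.getD x}
  | compl {s : Set M} : QFDef C s → QFDef C sᶜ
  | union {s t : Set M} : QFDef C s → QFDef C t → QFDef C (s ∪ t)

/-- The ternary relation interpreting the symbol `r`. -/
def interpC (L : FirstOrder.Language.{u, u}) (M : Type u) [L.Structure M]
    (r : L.Relations 3) : M → M → M → Prop :=
  fun a b c => Language.Structure.RelMap r ![a, b, c]

/-- `M` is C-minimal: in every elementarily equivalent structure, every
definable (with parameters) subset is quantifier-free definable using only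
`C` and `=`. -/
def CMinimal (L : FirstOrder.Language.{u, u}) (M : Type u) [L.Structure M]
    (r : L.Relations 3) : Prop :=
  ∀ (N : Type u) (SN : L.Structure N),
    letI := SN
    L.ElementarilyEquivalent M N →
      ∀ s : Set N, Set.Definable₁ (univ : Set N) L s → QFDef (interpC L N r) s

/-- The (model-theoretic) algebraic closure of a set of parameters. -/
def acl (L : FirstOrder.Language.{u, u}) (M : Type u) [L.Structure M] (A : Set M) : Set M :=
  {a | ∃ s : Set M, Set.Definable₁ A L s ∧ s.Finite ∧ a ∈ s}

/-- The Steinitz exchange property for the algebraic closure. -/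
def HasExchange (L : FirstOrder.Language.{u, u}) (M : Type u) [L.Structure M] : Prop :=
  ∀ (A : Set M) (a b : M),
    a ∈ acl L M (A ∪ {b}) → a ∉ acl L M A → b ∈ acl L M (A ∪ {a})

/-- `M` is geometric: acl has the exchange property in every elementarily
equivalent structure. -/
def Geometric (L : FirstOrder.Language.{u, u}) (M : Type u) [L.Structure M] : Prop :=
  ∀ (N : Type u) (SN : L.Structure N),
    letI := SN
    L.ElementarilyEquivalent M N → HasExchange L N

/-- `M` is trivial: in every elementarily equivalent structure the pregeometry
given by acl is trivial. -/
def TrivialGeometry (L : FirstOrder.Language.{u, u}) (M : Type u) [L.Structure M] : Prop :=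
  ∀ (N : Type u) (SN : L.Structure N),
    letI := SN
    L.ElementarilyEquivalent M N →
      ∀ A : Set N, acl L N A = ⋃ a ∈ A, acl L N {a}

/-- `M` is definably maximal: every definable family of cones which is linearly
ordered by inclusion has a non-empty intersection. -/
def DefinablyMaximal (L : FirstOrder.Language.{u, u}) (M : Type u) [L.Structure M]
    (r : L.Relations 3) : Prop :=
  ∀ (n : ℕ) (S : Set (Fin (n + 1) → M)) (P : Set (Fin n → M)),
    Set.Definable (univ : Set M) L S →
    (∀ p ∈ P, IsCone (interpC L M r) {x | Fin.snoc p x ∈ S}) →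
    (∀ p ∈ P, ∀ q ∈ P,
      {x | Fin.snoc p x ∈ S} ⊆ {x | Fin.snoc q x ∈ S} ∨
        {x | Fin.snoc q x ∈ S} ⊆ {x | Fin.snoc p x ∈ S}) →
    P.Nonempty → (⋂ p ∈ P, {x | Fin.snoc p x ∈ S}).Nonempty

/-- Leaves of the underlying tree are the singletons. -/
def IsLeafSet (s : Set M) : Prop := ∃ x : M, s = {x}

/-- The interval `(lo, hi)` of the branch `br c`, consisting of all nodes
(coded as the closed balls they determine) strictly between the endpoints.
`lo = none` denotes `-∞`; `lo = some p` denotes the node `c ∧ p`; `hi : M`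
denotes the node `c ∧ hi` (the leaf `c` when `hi = c`).  The tree ordering is
reverse inclusion of balls. -/
def branchInterval (C : M → M → M → Prop) (c : M) (lo : Option M) (hi : M) :
    Set (Set M) :=
  {B | (∃ s, B = node C c s) ∧ ¬ IsLeafSet B ∧
    (∀ p ∈ lo, B ⊂ node C c p) ∧ node C c hi ⊂ B}

/-- `I` is an interval of the branch `br c`. -/
def IsIntervalOn (C : M → M → M → Prop) (c : M) (I : Set (Set M)) : Prop :=
  ∃ (lo : Option M) (hi : M), I = branchInterval C c lo hi

/-- `I` is a bounded interval of `br c` (bounded from below and from above). -/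
def IsBoundedInterval (C : M → M → M → Prop) (c : M) (I : Set (Set M)) : Prop :=
  ∃ p hi : M, I = branchInterval C c (some p) hi ∧ ¬ IsLeafSet (node C c hi)

/-- `I` is an unbounded (i.e. not bounded) interval of `br c`. -/
def IsUnboundedInterval (C : M → M → M → Prop) (c : M) (I : Set (Set M)) :
    Prop :=
  IsIntervalOn C c I ∧ ¬ IsBoundedInterval C c I

/-- The relation on nodes coded by `S ⊆ M²` via `(s,t) ↦ (c ∧ s, d ∧ t)`. -/
def codedRel (C : M → M → M → Prop) (S : Set (Fin 2 → M)) (c d : M)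
    (B B' : Set M) : Prop :=
  ∃ s t : M, ![s, t] ∈ S ∧ B = node C c s ∧ B' = node C d t

/-- `S ⊆ M²` codes a bijection between the set `I` of nodes of `br c` and the
set `J` of nodes of `br d`. -/
def CodesBijectionBetween (C : M → M → M → Prop) (S : Set (Fin 2 → M))
    (c d : M) (I J : Set (Set M)) : Prop :=
  (∀ B B', codedRel C S c d B B' → B ∈ I ∧ B' ∈ J) ∧
  (∀ B ∈ I, ∃! B', B' ∈ J ∧ codedRel C S c d B B') ∧
  (∀ B' ∈ J, ∃! B, B ∈ I ∧ codedRel C S c d B B')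

/-- Condition (NB): there is no definable bijection between a bounded interval
and an unbounded interval of branches of the underlying tree. -/
def NB (L : FirstOrder.Language.{u, u}) (M : Type u) [L.Structure M] (r : L.Relations 3) :
    Prop :=
  ∀ (c d : M) (S : Set (Fin 2 → M)), Set.Definable (univ : Set M) L S →
    ∀ I J : Set (Set M),
      IsBoundedInterval (interpC L M r) c I →
      IsUnboundedInterval (interpC L M r) d J →
      ¬ CodesBijectionBetween (interpC L M r) S c d I J

/-- An infinite group definable in `M`: an infinite definable `G ⊆ Mⁿ`
together with a definable subset of `M^{3n}` which is the graph of a group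
operation on `G`. -/
def DefinableInfiniteGroup (L : FirstOrder.Language.{u, u}) (M : Type u)
    [L.Structure M] : Prop :=
  ∃ (n : ℕ) (G : Set (Fin n → M)) (mul : (Fin n → M) → (Fin n → M) → Fin n → M)
    (one : Fin n → M) (inv : (Fin n → M) → Fin n → M),
    Set.Definable (univ : Set M) L G ∧ G.Infinite ∧
    Set.Definable (univ : Set M) L
      {t : (Fin n ⊕ (Fin n ⊕ Fin n)) → M |
        t ∘ Sum.inl ∈ G ∧ t ∘ Sum.inr ∘ Sum.inl ∈ G ∧
          mul (t ∘ Sum.inl) (t ∘ Sum.inr ∘ Sum.inl) = t ∘ Sum.inr ∘ Sum.inr} ∧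
    one ∈ G ∧ (∀ a ∈ G, ∀ b ∈ G, mul a b ∈ G) ∧
    (∀ a ∈ G, ∀ b ∈ G, ∀ c ∈ G, mul (mul a b) c = mul a (mul b c)) ∧
    (∀ a ∈ G, mul one a = a ∧ mul a one = a) ∧
    (∀ a ∈ G, inv a ∈ G ∧ mul a (inv a) = one ∧ mul (inv a) a = one)

/-- `g` is a C-isomorphism from `A` onto `B`. -/
def CIsoOn (C : M → M → M → Prop) (A B : Set M) (g : M → M) : Prop :=
  Set.BijOn g A B ∧ ∀ x ∈ A, ∀ y ∈ A, ∀ z ∈ A, (C x y z ↔ C (g x) (g y) (g z))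

/-- The relation `C_e(f,g,h)`. -/
def CeRel (C : M → M → M → Prop) (V : Set M) (e : M) (f g h : M → M) : Prop :=
  ∃ W : Set M, IsCone C W ∧ e ∈ W ∧ W ⊆ V ∧ ∀ x ∈ W \ {e}, C (f x) (g x) (h x)

/-- The relation `(¬C)_e(f,g,h)`. -/
def NCeRel (C : M → M → M → Prop) (V : Set M) (e : M) (f g h : M → M) : Prop :=
  ∃ W : Set M, IsCone C W ∧ e ∈ W ∧ W ⊆ V ∧ ∀ x ∈ W \ {e}, ¬ C (f x) (g x) (h x)

/-- A function is definable on `V` if its graph over `V` is definable. -/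
def DefinableFunOn (L : FirstOrder.Language.{u, u}) (M : Type u) [L.Structure M]
    (V : Set M) (g : M → M) : Prop :=
  Set.Definable (univ : Set M) L {t : Fin 2 → M | t 0 ∈ V ∧ g (t 0) = t 1}

/-- A nice family of functions `{f u : u ∈ U}` on the cone `V`, with absorbing
element `e`. -/
structure NiceFamily (L : FirstOrder.Language.{u, u}) (M : Type u) [L.Structure M]
    (C : M → M → M → Prop) where
  U : Set M
  V : Set M
  e : M
  f : M → M → M
  coneU : IsCone C U
  coneV : IsCone C V
  he : e ∈ V
  definable : Set.Definable (univ : Set M) L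
    {t : Fin 3 → M | t 0 ∈ U ∧ t 1 ∈ V ∧ f (t 0) (t 1) = t 2}
  auto : ∀ u ∈ U, CIsoOn C V V (f u)
  fixe : ∀ u ∈ U, f u e = e
  star : ∀ x ∈ V \ {e}, ∃ V' : Set M, V' ⊆ V ∧ IsCone C V' ∧
    CIsoOn C U V' fun u => f u x

namespace NiceFamily

variable {L : FirstOrder.Language.{u, u}} [L.Structure M] {C : M → M → M → Prop}

/-- `f u` is tangent to `g` relatively to the family. -/
def Tangent (F : NiceFamily L M C) (u : M) (g : M → M) : Prop :=
  u ∈ F.U ∧ ∀ u' ∈ F.U, NCeRel C F.V F.e (F.f u) (F.f u') g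

/-- The set `T_g` of indices of tangents to `g`. -/
def Tset (F : NiceFamily L M C) (g : M → M) : Set M := {u | F.Tangent u g}

/-- The set `Γ_{g,u}`. -/
def Gamma (F : NiceFamily L M C) (g : M → M) (u : M) : Set M :=
  {y | y ∈ F.U ∧ CeRel C F.V F.e (F.f u) (F.f y) g}

/-- `g` is derivable relatively to the family: it has exactly one tangent. -/
def Derivable (F : NiceFamily L M C) (g : M → M) : Prop := ∃! u, F.Tangent u g

/-- `f u` is non-dilating. -/
def NonDilating (F : NiceFamily L M C) (u : M) : Prop :=
  NCeRel C F.V F.e (fun x => F.f u (F.f u x)) (F.f u) id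

/-- `u₀` is an identity element for the family. -/
def HasIdentity (F : NiceFamily L M C) (u₀ : M) : Prop :=
  u₀ ∈ F.U ∧ ∀ x ∈ F.V, F.f u₀ x = x

end NiceFamily

/-- Continuity on `A` with respect to the topology generated by the cones. -/
def ContinuousOnCones (C : M → M → M → Prop) (A : Set M) (g : M → M) : Prop :=
  ∀ x ∈ A, ∀ W : Set M, IsCone C W → g x ∈ W →
    ∃ W' : Set M, IsCone C W' ∧ x ∈ W' ∧ ∀ y ∈ W' ∩ A, g y ∈ W

/-!
By property (*), `C u v w` holds if and only if `C (f u x) (f v x) (f w x)` does, whichever `x ≠ e`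
of `V` is chosen: how members of the family compare does not depend on the point. Two relations
that hold near `e` have a common witness `x ≠ e`, since cones around `e` are nested and contain
points other than `e`. Hence a nonempty `Γ_{g,u}` can be read off at one point `x` close to `e`: it
consists of the `z ∈ U` for which `f z x` lies in the cone of `g x` at the node `f u x ∧ g x`. Using
the same `x` for two indices `u`, `u'` turns the chain property into nestedness of cones around
`g x`.
-/

namespace IsCRelation

variable {C : M → M → M → Prop}

theorem symm (hC : IsCRelation C) {x y z : M} (h : C x y z) : C x z y :=
  hC.1 x y z h

theorem asymm (hC : IsCRelation C) {x y z : M} (h : C x y z) : ¬ C y x z :=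
  hC.2.1 x y z h

theorem split (hC : IsCRelation C) {x y z : M} (w : M) (h : C x y z) : C x w z ∨ C w y z :=
  hC.2.2.1 x y z w h

theorem exists_ne (hC : IsCRelation C) {x y : M} (hxy : x ≠ y) : ∃ z, z ≠ y ∧ C x y z :=
  hC.2.2.2 x y hxy

theorem trans (hC : IsCRelation C) {a x y z : M} (hxy : C a x y) (hyz : C a y z) : C a x z := by
  rcases hC.split z (hC.symm hxy) with hazx | hzyx
  · exact hC.symm hazx
  · exact (hC.split x hyz).resolve_right fun hxyz => hC.asymm (hC.symm hxyz) (hC.symm hzyx)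

theorem setOf_subset_or_subset (hC : IsCRelation C) (a b c : M) :
    {y | C a y c} ⊆ {y | C b y c} ∨ {y | C b y c} ⊆ {y | C a y c} := by
  by_cases hab : C a b c
  · exact Or.inr fun _ hy => (hC.split a hy).resolve_left (hC.asymm hab)
  · exact Or.inl fun _ hy => (hC.split b hy).resolve_left hab

end IsCRelation

namespace IsCone

variable {C : M → M → M → Prop} {W W' : Set M} {e : M}

theorem exists_eq_setOf (hW : IsCone C W) (hC : IsCRelation C) (he : e ∈ W) :
    ∃ a, a ≠ e ∧ W = {x | C a x e} := by
  obtain ⟨a, b, -, rfl⟩ := hW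
  refine ⟨a, ?_, Set.ext fun x => ⟨fun hx => hC.trans hx (hC.symm he), fun hx => hC.trans hx he⟩⟩
  rintro rfl
  exact hC.asymm he he

theorem exists_mem_ne (hW : IsCone C W) (hC : IsCRelation C) (he : e ∈ W) : ∃ x ∈ W, x ≠ e := by
  obtain ⟨a, hae, rfl⟩ := hW.exists_eq_setOf hC he
  obtain ⟨x, hxe, hx⟩ := hC.exists_ne hae
  exact ⟨x, hC.symm hx, hxe⟩

theorem subset_or_subset (hW : IsCone C W) (hW' : IsCone C W') (hC : IsCRelation C)
    (he : e ∈ W) (he' : e ∈ W') : W ⊆ W' ∨ W' ⊆ W := by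
  obtain ⟨a, -, rfl⟩ := hW.exists_eq_setOf hC he
  obtain ⟨a', -, rfl⟩ := hW'.exists_eq_setOf hC he'
  exact hC.setOf_subset_or_subset a a' e

theorem setOf_subset (hW : IsCone C W) (hC : IsCRelation C) {u v : M} (hu : u ∈ W) (hv : v ∈ W) :
    {z | C u z v} ⊆ W := by
  obtain ⟨a, -, rfl⟩ := hW.exists_eq_setOf hC hv
  exact fun z hz => (hC.split a hz).resolve_left (hC.asymm hu)

end IsCone

namespace CeRel

variable {C : M → M → M → Prop} {V : Set M} {e : M} {f g h f' g' h' : M → M}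

theorem mono (H : CeRel C V e f g h)
    (himp : ∀ x ∈ V \ {e}, C (f x) (g x) (h x) → C (f' x) (g' x) (h' x)) :
    CeRel C V e f' g' h' := by
  obtain ⟨W, hW, heW, hWV, hCW⟩ := H
  exact ⟨W, hW, heW, hWV, fun x hx => himp x ⟨hWV hx.1, hx.2⟩ (hCW x hx)⟩

theorem exists_common (hC : IsCRelation C) (H : CeRel C V e f g h) (H' : CeRel C V e f' g' h') :
    ∃ x ∈ V \ {e}, C (f x) (g x) (h x) ∧ C (f' x) (g' x) (h' x) := by
  obtain ⟨W, hW, heW, hWV, hCW⟩ := H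
  obtain ⟨W', hW', heW', hWV', hCW'⟩ := H'
  rcases hW.subset_or_subset hW' hC heW heW' with hsub | hsub
  · obtain ⟨x, hxW, hxe⟩ := hW.exists_mem_ne hC heW
    exact ⟨x, ⟨hWV hxW, hxe⟩, hCW x ⟨hxW, hxe⟩, hCW' x ⟨hsub hxW, hxe⟩⟩
  · obtain ⟨x, hxW', hxe⟩ := hW'.exists_mem_ne hC heW'
    exact ⟨x, ⟨hWV' hxW', hxe⟩, hCW x ⟨hsub hxW', hxe⟩, hCW' x ⟨hxW', hxe⟩⟩

end CeRel

namespace NiceFamily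

variable {L : FirstOrder.Language.{u, u}} [L.Structure M] {C : M → M → M → Prop}
  {g : M → M} {u v w x u' : M}

theorem rel_apply_iff (F : NiceFamily L M C) (hx : x ∈ F.V \ {F.e}) (hu : u ∈ F.U) (hv : v ∈ F.U)
    (hw : w ∈ F.U) : C (F.f u x) (F.f v x) (F.f w x) ↔ C u v w := by
  obtain ⟨-, -, -, -, hiso⟩ := F.star x hx
  exact (hiso u hu v hv w hw).symm

theorem gamma_eq_setOf (F : NiceFamily L M C) (hC : IsCRelation C) (hu : u ∈ F.U)
    (hv : v ∈ F.Gamma g u) : F.Gamma g u = {z | C u z v} := by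
  obtain ⟨hvU, hv⟩ := hv
  ext z
  constructor
  · rintro ⟨hzU, hz⟩
    obtain ⟨x, hx, hzx, hvx⟩ := hz.exists_common hC hv
    exact (F.rel_apply_iff hx hu hzU hvU).1 (hC.trans hzx (hC.symm hvx))
  · intro hz
    have hzU : z ∈ F.U := F.coneU.setOf_subset hC hu hvU hz
    exact ⟨hzU, hv.mono fun x hx hvx => hC.trans ((F.rel_apply_iff hx hu hzU hvU).2 hz) hvx⟩

theorem gamma_eq_setOf_rel_apply (F : NiceFamily L M C) (hC : IsCRelation C) (hu : u ∈ F.U)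
    (hv : v ∈ F.Gamma g u) (hx : x ∈ F.V \ {F.e}) (hvx : C (F.f u x) (F.f v x) (g x)) :
    F.Gamma g u = {z ∈ F.U | C (F.f u x) (F.f z x) (g x)} := by
  ext z
  constructor
  · intro hz
    have hzv : C u z v := (F.gamma_eq_setOf hC hu hv).subset hz
    exact ⟨hz.1, hC.trans ((F.rel_apply_iff hx hu hz.1 hv.1).2 hzv) hvx⟩
  · rintro ⟨hzU, hzx⟩
    rw [F.gamma_eq_setOf hC hu hv]
    exact (F.rel_apply_iff hx hu hzU hv.1).1 (hC.trans hzx (hC.symm hvx))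

theorem gamma_subset_or_subset (F : NiceFamily L M C) (hC : IsCRelation C) (hu : u ∈ F.U)
    (hu' : u' ∈ F.U) (hne : (F.Gamma g u).Nonempty) (hne' : (F.Gamma g u').Nonempty) :
    F.Gamma g u ⊆ F.Gamma g u' ∨ F.Gamma g u' ⊆ F.Gamma g u := by
  obtain ⟨v, hv⟩ := hne
  obtain ⟨v', hv'⟩ := hne'
  obtain ⟨x, hx, hvx, hvx'⟩ := hv.2.exists_common hC hv'.2
  rw [F.gamma_eq_setOf_rel_apply hC hu hv hx hvx, F.gamma_eq_setOf_rel_apply hC hu' hv' hx hvx']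
  exact (hC.setOf_subset_or_subset (F.f u x) (F.f u' x) (g x)).imp
    (fun hsub _ hz => ⟨hz.1, hsub hz.2⟩) (fun hsub _ hz => ⟨hz.1, hsub hz.2⟩)

end NiceFamily

theorem statement10_general {L : FirstOrder.Language.{u, u}} {M : Type u} [L.Structure M]
    {C : M → M → M → Prop} (hC : IsCRelation C) (F : NiceFamily L M C) (g : M → M) :
    (∀ u ∈ F.U, ∀ v ∈ F.Gamma g u, F.Gamma g u = {z | C u z v}) ∧
    (∀ u ∈ F.U, ∀ u' ∈ F.U, (F.Gamma g u).Nonempty → (F.Gamma g u').Nonempty →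
      F.Gamma g u ⊆ F.Gamma g u' ∨ F.Gamma g u' ⊆ F.Gamma g u) :=
  ⟨fun _ hu _ hv => F.gamma_eq_setOf hC hu hv,
    fun _ hu _ hu' hne hne' => F.gamma_subset_or_subset hC hu hu' hne hne'⟩

theorem statement10 {L : FirstOrder.Language.{u, u}} {M : Type u}
    [L.Structure M] (r : L.Relations 3)
    (hC : IsCRelation (interpC L M r))
    (hmin : CMinimal L M r)
    (F : NiceFamily L M (interpC L M r))
    (g : M → M) (hg : DefinableFunOn L M F.V g)
    (hgV : Set.MapsTo g F.V F.V) (hge : g F.e = F.e) :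
    (∀ u ∈ F.U, (F.Gamma g u).Nonempty →
      ∃ v ∈ F.Gamma g u, F.Gamma g u = {z | interpC L M r u z v}) ∧
    (∀ u ∈ F.U, ∀ u' ∈ F.U, (F.Gamma g u).Nonempty → (F.Gamma g u').Nonempty →
      F.Gamma g u ⊆ F.Gamma g u' ∨ F.Gamma g u' ⊆ F.Gamma g u) := by
  obtain ⟨hcone, hchain⟩ := statement10_general hC F g
  exact ⟨fun u hu ⟨v, hv⟩ => ⟨v, hv, hcone u hu v hv⟩, hchain⟩

end CMinPaper
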